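/- arXiv:2501.02693 — 12 statements merged into one kernel-verified Lean document; each statement's English description precedes it below -/
import Mathlib

section
/- Let Y be a σ-compact Polish space, Z a σ-compact topological space, and W an arbitrary type (regarded as a discrete space). Let g : Y × Z × W → ℝ̄ be a function such that for every w ∈ W the map (y,z) ↦ g(y,z,w) is lower semicontinuous on Y × Z. Then the function f : Y → ℝ̄ defined by f(y) = inf_{z ∈ Z} sup_{w ∈ W} g(y,z,w) is Borel measurable; moreover, for every r ∈ ℝ̄ the strict sublevel set {y ∈ Y : f(y) < r} is a countable union of closed subsets of Y. -/
open MeasureTheory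

/-- For σ-compact Polish `Y`, σ-compact `Z`, arbitrary `W`, and
`g : Y × Z × W → ℝ̄` lower semicontinuous in `(y,z)` for each `w`, the function
`f y = ⨅ z, ⨆ w, g (y,z,w)` is Borel measurable and each strict sublevel set
`{y | f y < r}` is a countable union of closed sets. -/
theorem stmt0 {Y Z W : Type*}
    [TopologicalSpace Y] [PolishSpace Y] [SigmaCompactSpace Y]
    [MeasurableSpace Y] [BorelSpace Y]
    [TopologicalSpace Z] [SigmaCompactSpace Z]
    (g : Y × Z × W → EReal)
    (hg : ∀ w : W, LowerSemicontinuous fun p : Y × Z => g (p.1, p.2, w)) :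
    Measurable (fun y : Y => ⨅ z : Z, ⨆ w : W, g (y, z, w)) ∧
      ∀ r : EReal, ∃ C : ℕ → Set Y,
        (∀ m : ℕ, IsClosed (C m)) ∧
          {y : Y | (⨅ z : Z, ⨆ w : W, g (y, z, w)) < r} = ⋃ m : ℕ, C m := by
  have key : ∀ r : EReal, ∃ C : ℕ → Set Y,
        (∀ m : ℕ, IsClosed (C m)) ∧
          {y : Y | (⨅ z : Z, ⨆ w : W, g (y, z, w)) < r} = ⋃ m : ℕ, C m := by
    intro r
    obtain ⟨e, he⟩ := exists_surjective_nat (ℚ × ℕ)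
    let D : ℚ × ℕ → Set Y := fun p =>
      {y | (((p.1 : ℝ) : EReal) < r) ∧
        ∃ z ∈ compactCovering Z p.2, ∀ w, g (y, z, w) ≤ ((p.1 : ℝ) : EReal)}
    refine ⟨fun m => D (e m), ?_, ?_⟩
    · intro m
      change IsClosed (D (e m))
      generalize e m = p
      by_cases hp : (((p.1 : ℝ) : EReal) < r)
      · have hcs : CompactSpace (compactCovering Z p.2) :=
          isCompact_iff_compactSpace.mp (isCompact_compactCovering Z p.2)
        have hS : IsClosed {x : Y × Z | ∀ w, g (x.1, x.2, w) ≤ ((p.1 : ℝ) : EReal)} := by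
          rw [Set.ofPred_forall]
          exact isClosed_iInter fun w => (hg w).isClosed_preimage _
        have hcont : Continuous (fun x : Y × compactCovering Z p.2 => (x.1, (x.2 : Z))) := by
          fun_prop
        have h2 := isClosedMap_fst_of_compactSpace _ (hS.preimage hcont)
        convert h2 using 1
        ext y
        simp only [D, Set.mem_ofPred_eq, Set.mem_image, Set.mem_preimage]
        constructor
        · rintro ⟨-, z, hz, h⟩
          exact ⟨(y, ⟨z, hz⟩), h, rfl⟩
        · rintro ⟨⟨y', z⟩, h, rfl⟩
          exact ⟨hp, z, z.2, h⟩
      · have : D p = ∅ := by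
          ext y
          simp [D, hp]
        rw [this]
        exact isClosed_empty
    · ext y
      simp only [Set.mem_ofPred_eq, Set.mem_iUnion]
      constructor
      · intro h
        obtain ⟨z, hz⟩ := iInf_lt_iff.mp h
        obtain ⟨q, hq1, hq2⟩ := EReal.lt_iff_exists_rat_btwn.mp hz
        obtain ⟨n, hn⟩ := exists_mem_compactCovering z
        obtain ⟨m, hm⟩ := he (q, n)
        refine ⟨m, ?_⟩
        rw [hm]
        exact ⟨hq2, z, hn, fun w => (le_iSup (fun w => g (y, z, w)) w).trans hq1.le⟩
      · rintro ⟨m, hq, z, -, h⟩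
        exact ((iInf_le _ z).trans (iSup_le h)).trans_lt hq
  refine ⟨measurable_of_Iio fun r => ?_, key⟩
  obtain ⟨C, hC, h⟩ := key r
  change MeasurableSet {y : Y | (⨅ z : Z, ⨆ w : W, g (y, z, w)) < r}
  rw [h]
  exact MeasurableSet.iUnion fun m => (hC m).measurableSet
end

section
/- Let X, Y, Z, W be Polish spaces with Y and Z σ-compact, and let g : X × Y × Z × W → ℝ̄ be lower semicontinuous. Then the function f : X → ℝ̄ defined by f(x) = sup_{y ∈ Y} inf_{z ∈ Z} sup_{w ∈ W} g(x,y,z,w) is semi-Σ¹₁, i.e. for every r ∈ ℝ̄ the superlevel set {x ∈ X : f(x) > r} is analytic; consequently, for every σ-finite Borel measure μ on X and every r ∈ ℝ̄, the set {x ∈ X : f(x) > r} is μ-null-measurable (measurable with respect to the completion of μ). -/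
open MeasureTheory

section Helpers
open Set Filter Topology

lemma exists_box_subset (n : ℕ → ℕ) (V : Set (ℕ → ℕ)) (hV : IsOpen V)
    (hC : {x : ℕ → ℕ | ∀ i, x i ≤ n i} ⊆ V) :
    ∃ k, {x : ℕ → ℕ | ∀ i < k, x i ≤ n i} ⊆ V := by
  by_contra! hcon
  have h1 : ∀ k, ∃ x : ℕ → ℕ, (∀ i < k, x i ≤ n i) ∧ x ∉ V := by
    intro k
    obtain ⟨x, hx, hxV⟩ := Set.not_subset.1 (hcon k)
    exact ⟨x, hx, hxV⟩
  choose x hx hxV using h1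
  have hcomp : IsCompact {x : ℕ → ℕ | ∀ i, x i ≤ n i} := by
    have := isCompact_univ_pi (s := fun i => Set.Iic (n i))
      (fun i => (Set.finite_Iic (n i)).isCompact)
    convert this using 1
    ext x; simp [Pi.le_def]
  obtain ⟨y, hy, φ, hφ, hlim⟩ := hcomp.tendsto_subseq
    (x := fun k i => min (x k i) (n i)) (fun k i => min_le_right _ _)
  have hlim2 : Tendsto (fun k => x (φ k)) atTop (𝓝 y) := by
    rw [tendsto_pi_nhds] at hlim ⊢
    intro i
    refine (hlim i).congr' ?_
    filter_upwards [eventually_gt_atTop i] with k hk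
    have := hx (φ k) i (lt_of_lt_of_le hk hφ.le_apply)
    simp [this]
  obtain ⟨k, hk⟩ := (hlim2.eventually (hV.mem_nhds (hC hy))).exists
  exact hxV _ hk

lemma exists_compact_range {X : Type*} [TopologicalSpace X] [PolishSpace X] [MeasurableSpace X]
    [BorelSpace X] (μ : Measure X) [IsFiniteMeasure μ] (f : (ℕ → ℕ) → X) (hf : Continuous f)
    (c : ENNReal) (hc : c < μ (range f)) :
    ∃ K, K ⊆ range f ∧ IsCompact K ∧ c ≤ μ K := by
  have step : ∀ (k : ℕ) (n : ℕ → ℕ), c < μ (f '' {x | ∀ i < k, x i ≤ n i}) →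
      ∃ m, c < μ (f '' {x | (∀ i < k, x i ≤ n i) ∧ x k ≤ m}) := by
    intro k n h
    have hU : f '' {x | ∀ i < k, x i ≤ n i} =
        ⋃ m, f '' {x | (∀ i < k, x i ≤ n i) ∧ x k ≤ m} := by
      rw [← image_iUnion]
      congr 1
      ext x
      simp only [mem_ofPred_eq, mem_iUnion]
      exact ⟨fun h => ⟨x k, h, le_rfl⟩, fun ⟨m, h, _⟩ => h⟩
    have hmono : Monotone fun m => f '' {x : ℕ → ℕ | (∀ i < k, x i ≤ n i) ∧ x k ≤ m} := by
      intro a b hab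
      exact image_mono fun x hx => ⟨hx.1, hx.2.trans hab⟩
    rw [hU, hmono.measure_iUnion] at h
    exact lt_iSup_iff.1 h
  -- build the sequence
  let P : ℕ → Type := fun k => {n : ℕ → ℕ // c < μ (f '' {x | ∀ i < k, x i ≤ n i})}
  have ext : ∀ k (p : P k), ∃ q : P (k + 1), ∀ i < k, q.1 i = p.1 i := by
    intro k p
    obtain ⟨m, hm⟩ := step k p.1 p.2
    refine ⟨⟨Function.update p.1 k m, hm.trans_le (measure_mono (image_mono ?_))⟩, ?_⟩
    · intro x hx i hi
      rcases Nat.lt_succ_iff_lt_or_eq.1 hi with h | h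
      · rw [Function.update_of_ne h.ne]; exact hx.1 i h
      · subst h; simpa using hx.2
    · intro i hi
      exact Function.update_of_ne hi.ne _ _
  choose E hE using ext
  let p0 : P 0 := ⟨fun _ => 0, by simpa [image_univ] using hc⟩
  let s : ∀ k, P k := fun k => Nat.rec p0 (fun k p => E k p) k
  have hs : ∀ k i, i < k → (s k).1 i = (s (i + 1)).1 i := by
    intro k i hi
    induction k, hi using Nat.le_induction with
    | base => rfl
    | succ k hk ih => rw [← ih]; exact hE k (s k) i hk
  let n : ℕ → ℕ := fun i => (s (i + 1)).1 i
  have hn : ∀ k, c < μ (f '' {x | ∀ i < k, x i ≤ n i}) := by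
    intro k
    refine (s k).2.trans_le (measure_mono (image_mono ?_))
    intro x hx i hi
    exact (hx i hi).trans (hs k i hi).le
  have hcomp : IsCompact {x : ℕ → ℕ | ∀ i, x i ≤ n i} := by
    have := isCompact_univ_pi (s := fun i => Set.Iic (n i))
      (fun i => (Set.finite_Iic (n i)).isCompact)
    convert this using 1
    ext x; simp [Pi.le_def]
  refine ⟨f '' {x | ∀ i, x i ≤ n i}, image_subset_range _ _, hcomp.image hf, ?_⟩
  letI := TopologicalSpace.upgradeIsCompletelyMetrizable X
  rw [Set.measure_eq_iInf_isOpen]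
  refine le_iInf₂ fun U hU => le_iInf fun hUo => ?_
  obtain ⟨k, hk⟩ := exists_box_subset n (f ⁻¹' U) (hUo.preimage hf) (image_subset_iff.1 hU)
  exact (hn k).le.trans (measure_mono (image_subset_iff.2 hk))

lemma analytic_nullMeasurable_finite {X : Type*} [TopologicalSpace X] [PolishSpace X]
    [MeasurableSpace X] [BorelSpace X] (μ : Measure X) [IsFiniteMeasure μ] (A : Set X)
    (hA : AnalyticSet A) : NullMeasurableSet A μ := by
  rw [AnalyticSet] at hA
  rcases hA with rfl | ⟨f, hf, rfl⟩
  · exact MeasurableSet.empty.nullMeasurableSet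
  rcases eq_or_ne (μ (range f)) 0 with h0 | h0
  · exact NullMeasurableSet.of_null h0
  obtain ⟨c, -, hc, hlim⟩ := exists_seq_strictMono_tendsto' (pos_iff_ne_zero.2 h0)
  choose K hKs hKc hK using fun i => exists_compact_range μ f hf (c i) (hc i).2
  have hm : MeasurableSet (⋃ i, K i) := MeasurableSet.iUnion fun i => (hKc i).measurableSet
  have hle : μ (range f) ≤ μ (⋃ i, K i) :=
    le_of_tendsto' hlim fun i => (hK i).trans (measure_mono (subset_iUnion _ _))
  exact hm.nullMeasurableSet.congr
    (ae_eq_of_subset_of_measure_ge (iUnion_subset hKs) hle hm.nullMeasurableSet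
      (measure_ne_top _ _))

lemma analytic_nullMeasurable {X : Type*} [TopologicalSpace X] [PolishSpace X]
    [MeasurableSpace X] [BorelSpace X] (μ : Measure X) [SigmaFinite μ] (A : Set X)
    (hA : AnalyticSet A) : NullMeasurableSet A μ := by
  obtain ⟨ν, hν, hac, -⟩ := exists_isFiniteMeasure_absolutelyContinuous μ
  exact (analytic_nullMeasurable_finite ν A hA).mono_ac hac

lemma superlevel_analytic {X Y Z W : Type*}
    [TopologicalSpace X] [PolishSpace X]
    [TopologicalSpace Y] [PolishSpace Y]
    [TopologicalSpace Z] [SigmaCompactSpace Z]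
    [TopologicalSpace W]
    (g : X × Y × Z × W → EReal) (hg : LowerSemicontinuous g) (r : EReal) :
    AnalyticSet {x : X | r < ⨆ y : Y, ⨅ z : Z, ⨆ w : W, g (x, y, z, w)} := by
  have hopen : ∀ (q : EReal) (n : ℕ), IsOpen {p : X × Y | ∀ z ∈ compactCovering Z n,
      ∃ w, q < g (p.1, p.2, z, w)} := by
    intro q n
    rw [isOpen_iff_eventually]
    intro p hp
    refine (isCompact_compactCovering Z n).eventually_forall_of_forall_eventually ?_
    intro z hz
    obtain ⟨w, hw⟩ := hp z hz
    have hc : Continuous fun t : (X × Y) × Z => (t.1.1, t.1.2, t.2, w) := by fun_prop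
    have := hc.continuousAt (x := (p, z)) |>.eventually (hg _ q hw)
    filter_upwards [this] with t ht
    exact ⟨w, ht⟩
  have key : {x : X | r < ⨆ y : Y, ⨅ z : Z, ⨆ w : W, g (x, y, z, w)} =
      Prod.fst '' ⋃ q : {q : ℚ // r < ((q : ℝ) : EReal)}, ⋂ n : ℕ,
        {p : X × Y | ∀ z ∈ compactCovering Z n,
          ∃ w, (((q : ℚ) : ℝ) : EReal) < g (p.1, p.2, z, w)} := by
    ext x
    simp only [mem_ofPred_eq, mem_image, mem_iUnion, mem_iInter, lt_iSup_iff, Prod.exists,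
      exists_and_right, exists_eq_right]
    refine exists_congr fun y => ?_
    constructor
    · intro h
      obtain ⟨q, hq1, hq2⟩ := EReal.lt_iff_exists_rat_btwn.1 h
      exact ⟨⟨q, hq1⟩, fun n z _ => lt_iSup_iff.1 (hq2.trans_le (iInf_le _ z))⟩
    · rintro ⟨q, h⟩
      refine q.2.trans_le (le_iInf fun z => ?_)
      obtain ⟨n, hn⟩ := mem_iUnion.1 (iUnion_compactCovering Z ▸ mem_univ z)
      exact (lt_iSup_iff.2 (h n z hn)).le
  rw [key]
  borelize (X × Y)
  refine AnalyticSet.image_of_continuous ?_ continuous_fst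
  exact (MeasurableSet.iUnion fun q => MeasurableSet.iInter fun n =>
    (hopen _ n).measurableSet).analyticSet

end Helpers

/-- For Polish `X, Y, Z, W` with `Y, Z` σ-compact and lower
semicontinuous `g : X × Y × Z × W → ℝ̄`, the function
`f x = ⨆ y, ⨅ z, ⨆ w, g (x,y,z,w)` is semi-Σ¹₁ (all strict superlevel sets
are analytic); consequently all its strict superlevel sets are null-measurable
for every σ-finite Borel measure on `X`. -/
theorem stmt1 {X Y Z W : Type*}
    [TopologicalSpace X] [PolishSpace X] [MeasurableSpace X] [BorelSpace X]
    [TopologicalSpace Y] [PolishSpace Y] [SigmaCompactSpace Y]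
    [TopologicalSpace Z] [PolishSpace Z] [SigmaCompactSpace Z]
    [TopologicalSpace W] [PolishSpace W]
    (g : X × Y × Z × W → EReal) (hg : LowerSemicontinuous g) :
    (∀ r : EReal,
      AnalyticSet {x : X | r < ⨆ y : Y, ⨅ z : Z, ⨆ w : W, g (x, y, z, w)}) ∧
    ∀ (μ : Measure X), SigmaFinite μ → ∀ r : EReal,
      NullMeasurableSet {x : X | r < ⨆ y : Y, ⨅ z : Z, ⨆ w : W, g (x, y, z, w)} μ := by
  exact ⟨fun r => superlevel_analytic g hg r, fun μ hμ r =>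
    analytic_nullMeasurable μ _ (superlevel_analytic g hg r)⟩
end

section
/- Let X be a Polish space and f : X → ℝ̄ a function. Then f is Borel measurable if and only if for every r ∈ ℝ̄ both the set {x ∈ X : f(x) > r} and the set {x ∈ X : f(x) < r} are analytic. -/
open MeasureTheory

/-- A function `f : X → ℝ̄` on a Polish space is Borel measurable
iff all its strict superlevel and strict sublevel sets are analytic. -/
theorem stmt2 {X : Type*} [TopologicalSpace X] [PolishSpace X]
    [MeasurableSpace X] [BorelSpace X] (f : X → EReal) :
    Measurable f ↔
      ∀ r : EReal, AnalyticSet {x : X | r < f x} ∧ AnalyticSet {x : X | f x < r} := by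
  constructor
  · intro hf r
    exact ⟨(hf measurableSet_Ioi).analyticSet, (hf measurableSet_Iio).analyticSet⟩
  · intro h
    refine measurable_of_Ioi fun r => ?_
    refine AnalyticSet.measurableSet_of_compl (h r).1 ?_
    have key : (f ⁻¹' Set.Ioi r)ᶜ =
        ⋂ q : ℚ, {x : X | r < ((q : ℝ) : EReal) → f x < ((q : ℝ) : EReal)} := by
      ext x
      simp only [Set.mem_compl_iff, Set.mem_preimage, Set.mem_Ioi, not_lt, Set.mem_iInter,
        Set.mem_setOf_eq]
      constructor
      · intro hx q hq
        exact lt_of_le_of_lt hx hq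
      · intro hx
        by_contra! hlt
        obtain ⟨q, hq1, hq2⟩ := EReal.lt_iff_exists_rat_btwn.1 hlt
        exact lt_asymm hq2 (hx q hq1)
    rw [key]
    refine AnalyticSet.iInter fun q => ?_
    by_cases hq : r < ((q : ℝ) : EReal)
    · simpa only [hq, true_imp_iff] using (h _).2
    · simpa only [hq, false_imp_iff, Set.setOf_true] using
        (isClosed_univ : IsClosed (Set.univ : Set X)).analyticSet
end

section
/- Let X be a Polish space and f : X → ℝ̄ a semi-Σ¹₁ function (for every r ∈ ℝ̄ the set {x : f(x) > r} is analytic). Then f is universally measurable: for every σ-finite Borel measure μ on X and every r ∈ ℝ̄, the set {x ∈ X : f(x) > r} is μ-null-measurable (measurable with respect to the completion of μ). -/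
open MeasureTheory

open Filter Topology in
theorem aux_open (b : ℕ → ℕ) (V : Set (ℕ → ℕ)) (hV : IsOpen V)
    (h : {x : ℕ → ℕ | ∀ i, x i ≤ b i} ⊆ V) :
    ∃ n, {x : ℕ → ℕ | ∀ i < n, x i ≤ b i} ⊆ V := by
  by_contra hcon
  push Not at hcon
  have h1 : ∀ n, ∃ x : ℕ → ℕ, (∀ i < n, x i ≤ b i) ∧ x ∉ V := by
    intro n
    obtain ⟨x, hx, hxV⟩ := Set.not_subset.1 (hcon n)
    exact ⟨x, hx, hxV⟩
  choose x hx hxV using h1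
  have hC : IsCompact {x : ℕ → ℕ | ∀ i, x i ≤ b i} := by
    have := isCompact_univ_pi (fun i => (Set.finite_Iic (b i)).isCompact)
    convert this using 1
    ext y; simp [Pi.le_def]
  obtain ⟨z, hz, φ, hφ, hlim⟩ := hC.tendsto_subseq
    (x := fun n i => min (x n i) (b i)) (fun n i => min_le_right _ _)
  have hlim2 : Tendsto (fun n => x (φ n)) atTop (𝓝 z) := by
    rw [tendsto_pi_nhds] at hlim ⊢
    intro i
    refine (hlim i).congr' ?_
    filter_upwards [eventually_gt_atTop i] with n hn
    exact min_eq_left (hx _ _ (hn.trans_le hφ.le_apply))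
  have : z ∈ Vᶜ := hV.isClosed_compl.mem_of_tendsto hlim2 (Eventually.of_forall fun n => hxV _)
  exact this (h hz)

theorem aux_compact {X : Type*} [TopologicalSpace X] [PolishSpace X]
    [MeasurableSpace X] [BorelSpace X] (ν : Measure X) [IsFiniteMeasure ν]
    (g : (ℕ → ℕ) → X) (hg : Continuous g) (c : ENNReal) (hc : c < ν (Set.range g)) :
    ∃ K ⊆ Set.range g, IsCompact K ∧ c ≤ ν K := by
  have step : ∀ (n : ℕ) (D : Set (ℕ → ℕ)), ∃ m : ℕ, c < ν (g '' D) →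
      c < ν (g '' (D ∩ {x | x n ≤ m})) := by
    intro n D
    by_cases hD : c < ν (g '' D)
    · have e : g '' D = ⋃ m : ℕ, g '' (D ∩ {x | x n ≤ m}) := by
        rw [← Set.image_iUnion, ← Set.inter_iUnion]
        congr 1
        ext x
        simp only [Set.mem_inter_iff, Set.mem_iUnion, Set.mem_ofPred_eq]
        exact ⟨fun h => ⟨h, _, le_rfl⟩, fun h => h.1⟩
      have mono : Monotone fun m : ℕ => g '' (D ∩ {x | x n ≤ m}) := by
        intro a b hab
        apply Set.image_mono
        exact fun x hx => ⟨hx.1, le_trans hx.2 hab⟩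
      have hD' := hD
      rw [e, mono.measure_iUnion] at hD'
      obtain ⟨m, hm⟩ := lt_iSup_iff.1 hD'
      exact ⟨m, fun _ => hm⟩
    · exact ⟨0, fun h => absurd h hD⟩
  choose m hm using step
  let D : ℕ → Set (ℕ → ℕ) := fun n => Nat.rec Set.univ (fun n D => D ∩ {x | x n ≤ m n D}) n
  have hDs : ∀ n, D (n+1) = D n ∩ {x | x n ≤ m n (D n)} := fun n => rfl
  let b : ℕ → ℕ := fun n => m n (D n)
  have hD : ∀ n, D n = {x | ∀ i < n, x i ≤ b i} := by
    intro n
    induction n with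
    | zero => ext x; simp [D]
    | succ n ih =>
      rw [hDs]
      ext x
      constructor
      · rintro ⟨h1, h2⟩ i hi
        rw [ih] at h1
        rcases Nat.lt_succ_iff_lt_or_eq.1 hi with h | h
        · exact h1 i h
        · subst h; exact h2
      · intro h
        refine ⟨?_, h n (Nat.lt_succ_self n)⟩
        rw [ih]
        exact fun i hi => h i (hi.trans (Nat.lt_succ_self n))
  have hcD : ∀ n, c < ν (g '' D n) := by
    intro n
    induction n with
    | zero => simpa [D] using hc
    | succ n ih => exact hm n (D n) ih
  have hC : IsCompact {x : ℕ → ℕ | ∀ i, x i ≤ b i} := by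
    have := isCompact_univ_pi (fun i => (Set.finite_Iic (b i)).isCompact)
    convert this using 1
    ext y; simp [Pi.le_def]
  refine ⟨g '' {x | ∀ i, x i ≤ b i}, Set.image_subset_range _ _, hC.image hg, ?_⟩
  by_contra! hlt
  obtain ⟨U, hKU, hU, hUc⟩ := Set.exists_isOpen_lt_of_lt _ _ hlt
  obtain ⟨n, hn⟩ := aux_open b (g ⁻¹' U) (hU.preimage hg) (Set.image_subset_iff.1 hKU)
  rw [← hD] at hn
  exact absurd ((hcD n).trans_le (measure_mono (Set.image_subset_iff.2 hn))) hUc.asymm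

theorem aux_fin {X : Type*} [TopologicalSpace X] [PolishSpace X]
    [MeasurableSpace X] [BorelSpace X] (ν : Measure X) [IsFiniteMeasure ν]
    (A : Set X) (hA : AnalyticSet A) : NullMeasurableSet A ν := by
  rw [AnalyticSet] at hA
  rcases hA with rfl | ⟨g, hg, rfl⟩
  · exact nullMeasurableSet_empty
  by_cases h0 : ν (Set.range g) = 0
  · exact NullMeasurableSet.of_null h0
  obtain ⟨u, -, hu, hlim⟩ := exists_seq_strictMono_tendsto' (pos_iff_ne_zero.2 h0)
  choose K hKA hK hcK using fun n => aux_compact ν g hg (u n) (hu n).2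
  have hB : MeasurableSet (⋃ n, K n) := MeasurableSet.iUnion fun n => (hK n).measurableSet
  refine hB.nullMeasurableSet.congr (ae_eq_of_subset_of_measure_ge (Set.iUnion_subset hKA) ?_
    hB.nullMeasurableSet (measure_ne_top _ _))
  exact le_of_tendsto' hlim fun n => (hcK n).trans (measure_mono (Set.subset_iUnion K n))

/-- A semi-Σ¹₁ function `f : X → ℝ̄` on a Polish space is
universally measurable: all its strict superlevel sets are null-measurable
with respect to every σ-finite Borel measure on `X`. -/
theorem stmt3 {X : Type*} [TopologicalSpace X] [PolishSpace X]
    [MeasurableSpace X] [BorelSpace X] (f : X → EReal)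
    (hf : ∀ r : EReal, AnalyticSet {x : X | r < f x}) :
    ∀ (μ : Measure X), SigmaFinite μ → ∀ r : EReal,
      NullMeasurableSet {x : X | r < f x} μ := by
  intro μ hμ r
  exact (aux_fin μ.toFinite _ (hf r)).mono_ac (absolutelyContinuous_toFinite μ)
end

section
/- Fix n ∈ ℕ, rationals a_i < b_i for 1 ≤ i ≤ n, a real vector (x_1,…,x_n) with a_i < x_i < b_i for each i, and s ∈ ℝ. Then there exist natural numbers k_1, …, k_{3+n} such that k_1²·k_2 − k_3·Σ_{i=1}^{n} (k_1·x_i − k_{3+i} + k_3)² > s, while for every real vector (z_1,…,z_n) that does not satisfy a_i < z_i < b_i for all i, one has k_1²·k_2 − k_3·Σ_{i=1}^{n} (k_1·z_i − k_{3+i} + k_3)² < 0. -/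
/-- the "balls" lemma. Given rational intervals `(a i, b i)`, a point
`x` in the open box, and `s ∈ ℝ`, there are naturals `k₁, k₂, k₃` and `k_{3+i}`
(here `k i` for `i : Fin n`) making the displayed polynomial value exceed `s` at `x`
while being negative at every point outside the box. -/
theorem stmt7 (n : ℕ) (a b : Fin n → ℚ) (hab : ∀ i, a i < b i)
    (x : Fin n → ℝ) (hx : ∀ i, (a i : ℝ) < x i ∧ x i < (b i : ℝ)) (s : ℝ) :
    ∃ (k₁ k₂ k₃ : ℕ) (k : Fin n → ℕ),
      s < (k₁ : ℝ) ^ 2 * (k₂ : ℝ) -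
            (k₃ : ℝ) * ∑ i : Fin n, ((k₁ : ℝ) * x i - (k i : ℝ) + (k₃ : ℝ)) ^ 2 ∧
      ∀ z : Fin n → ℝ, ¬ (∀ i, (a i : ℝ) < z i ∧ z i < (b i : ℝ)) →
        (k₁ : ℝ) ^ 2 * (k₂ : ℝ) -
            (k₃ : ℝ) * ∑ i : Fin n, ((k₁ : ℝ) * z i - (k i : ℝ) + (k₃ : ℝ)) ^ 2 < 0 := by
  have h1 : ∃ d : ℝ, 0 < d ∧ ∀ i, (a i : ℝ) + d ≤ x i ∧ x i + d ≤ b i := by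
    have h : ∀ᶠ d : ℝ in nhdsWithin 0 (Set.Ioi 0),
        ∀ i, (a i : ℝ) + d ≤ x i ∧ x i + d ≤ b i := by
      rw [Filter.eventually_all]
      intro i
      have e1 : (0:ℝ) < x i - a i := by linarith [(hx i).1]
      have e2 : (0:ℝ) < b i - x i := by linarith [(hx i).2]
      have := Ioo_mem_nhdsGT (lt_min e1 e2)
      filter_upwards [this] with d hd
      have := lt_min_iff.1 hd.2
      constructor <;> linarith [this.1, this.2]
    obtain ⟨d, hd, hd'⟩ := (h.and self_mem_nhdsWithin).exists
    exact ⟨d, hd', hd⟩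
  obtain ⟨d, hd, hdx⟩ := h1
  have h2 : ∃ B : ℕ, 1 ≤ B ∧ ∀ i, -(B : ℝ) ≤ x i := by
    have h : ∀ᶠ B : ℕ in Filter.atTop, ∀ i, -(B : ℝ) ≤ x i := by
      rw [Filter.eventually_all]
      intro i
      obtain ⟨N, hN⟩ := exists_nat_ge (-x i)
      filter_upwards [Filter.eventually_ge_atTop N] with B hB
      have : (N : ℝ) ≤ B := by exact_mod_cast hB
      linarith
    exact ((Filter.eventually_ge_atTop 1).and h).exists
  obtain ⟨B, hB1, hB⟩ := h2
  have hB1' : (1 : ℝ) ≤ B := by exact_mod_cast hB1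
  obtain ⟨M, hM⟩ := exists_nat_ge (n * B + 1 + |s| + 2 / d + 5 / d ^ 2)
  have p1 : 0 ≤ (n : ℝ) * B := by positivity
  have p2 : 0 ≤ |s| := abs_nonneg s
  have p3 : 0 < 2 / d := by positivity
  have p4 : 0 < 5 / d ^ 2 := by positivity
  have hM0 : (1 : ℝ) ≤ M := by linarith
  have hMd : 2 ≤ M * d := by
    have : 2 / d ≤ M := by linarith
    rwa [div_le_iff₀ hd] at this
  have hMd2 : 5 ≤ M * d ^ 2 := by
    have : 5 / d ^ 2 ≤ M := by linarith
    rwa [div_le_iff₀ (by positivity)] at this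
  have hk : ∀ i, ∃ k : ℕ, |(M : ℝ) * x i - k + ((M * B : ℕ) : ℝ)| ≤ 1 := by
    intro i
    have h0 : 0 ≤ (M : ℝ) * x i + ((M * B : ℕ) : ℝ) := by
      push_cast
      nlinarith [hB i]
    refine ⟨⌊(M : ℝ) * x i + ((M * B : ℕ) : ℝ)⌋₊, ?_⟩
    have := Nat.floor_le h0
    have := Nat.lt_floor_add_one ((M : ℝ) * x i + ((M * B : ℕ) : ℝ))
    rw [abs_le]
    constructor <;> linarith
  choose k hk using hk
  refine ⟨M, 1, M * B, k, ?_, ?_⟩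
  · have hs : ∑ i : Fin n, ((M : ℝ) * x i - (k i : ℝ) + ((M * B : ℕ) : ℝ)) ^ 2 ≤ n := by
      calc _ ≤ ∑ i : Fin n, (1 : ℝ) :=
            Finset.sum_le_sum fun i _ => (sq_le_one_iff_abs_le_one _).2 (hk i)
        _ = n := by simp
    have h3 := mul_le_mul_of_nonneg_left hs (Nat.cast_nonneg (α := ℝ) (M * B))
    have h4 : (M : ℝ) * (1 + |s|) ≤ M * (M - n * B) :=
      mul_le_mul_of_nonneg_left (by linarith) (by linarith)
    have h5 : 1 * (1 + |s|) ≤ (M : ℝ) * (1 + |s|) :=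
      mul_le_mul_of_nonneg_right hM0 (by linarith)
    have h6 : ((M * B : ℕ) : ℝ) * n = M * (n * B) := by push_cast; ring
    have h7 := le_abs_self s
    simp only [Nat.cast_one]
    nlinarith
  · intro z hz
    push Not at hz
    obtain ⟨i, hi⟩ := hz
    have hfar : M * d - 1 ≤ |(M : ℝ) * z i - k i + ((M * B : ℕ) : ℝ)| := by
      have hki := abs_le.1 (hk i)
      by_cases hc : (a i : ℝ) < z i
      · have h8 : M * d ≤ (M : ℝ) * (z i - x i) :=
          mul_le_mul_of_nonneg_left (by linarith [hi hc, (hdx i).2]) (by linarith)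
        exact le_trans (by linarith [hki.1]) (le_abs_self _)
      · have h8 : M * d ≤ (M : ℝ) * (x i - z i) :=
          mul_le_mul_of_nonneg_left (by linarith [not_lt.1 hc, (hdx i).1]) (by linarith)
        exact le_trans (by linarith [hki.2]) (neg_le_abs _)
    have h9 : (M * d / 2) ^ 2 ≤ ((M : ℝ) * z i - k i + ((M * B : ℕ) : ℝ)) ^ 2 := by
      rw [← sq_abs ((M : ℝ) * z i - k i + ((M * B : ℕ) : ℝ))]
      exact pow_le_pow_left₀ (by positivity) (by linarith) 2
    have h10 : ((M : ℝ) * z i - k i + ((M * B : ℕ) : ℝ)) ^ 2 ≤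
        ∑ i : Fin n, ((M : ℝ) * z i - (k i : ℝ) + ((M * B : ℕ) : ℝ)) ^ 2 :=
      Finset.single_le_sum
        (f := fun i => ((M : ℝ) * z i - (k i : ℝ) + ((M * B : ℕ) : ℝ)) ^ 2)
        (fun i _ => sq_nonneg _) (Finset.mem_univ i)
    have h11 : (M : ℝ) ≤ ((M * B : ℕ) : ℝ) := by
      push_cast
      nlinarith
    have h12 : (M : ℝ) * (M * d / 2) ^ 2 ≤ ((M * B : ℕ) : ℝ) *
        ∑ i : Fin n, ((M : ℝ) * z i - (k i : ℝ) + ((M * B : ℕ) : ℝ)) ^ 2 :=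
      mul_le_mul h11 (h9.trans h10) (by positivity) (by positivity)
    have h13 : (M : ℝ) ^ 2 * 5 ≤ (M : ℝ) ^ 2 * (M * d ^ 2) :=
      mul_le_mul_of_nonneg_left hMd2 (by positivity)
    have h14 : 0 < (M : ℝ) ^ 2 := by positivity
    simp only [Nat.cast_one]
    nlinarith
end

section
/- Let A ⊆ ℝ × ℝ be a set such that for every y ∈ [0,1] the horizontal section {x ∈ [0,1] : (x,y) ∈ A} is countable, and for every x ∈ [0,1] the complementary vertical section {y ∈ [0,1] : (x,y) ∉ A} is countable. Then A ∩ ([0,1] × [0,1]) is not Lebesgue measurable: it is not null-measurable with respect to the 2-dimensional Lebesgue measure (the volume measure) on ℝ × ℝ. -/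
open MeasureTheory

/-- If `A ⊆ ℝ × ℝ` has all horizontal sections (within `[0,1]`)
countable and all complementary vertical sections (within `[0,1]`) countable,
then `A ∩ ([0,1] × [0,1])` is not Lebesgue measurable (not null-measurable for
the 2-dimensional volume measure on `ℝ × ℝ`). -/
theorem stmt8 (A : Set (ℝ × ℝ))
    (h1 : ∀ y ∈ Set.Icc (0 : ℝ) 1,
      {x ∈ Set.Icc (0 : ℝ) 1 | (x, y) ∈ A}.Countable)
    (h2 : ∀ x ∈ Set.Icc (0 : ℝ) 1,
      {y ∈ Set.Icc (0 : ℝ) 1 | (x, y) ∉ A}.Countable) :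
    ¬ NullMeasurableSet (A ∩ (Set.Icc (0 : ℝ) 1 ×ˢ Set.Icc (0 : ℝ) 1))
        (volume : Measure (ℝ × ℝ)) := by
  intro hS
  obtain ⟨T, hTS, hT, hTe⟩ := hS.exists_measurable_subset_ae_eq
  have hT0 : (volume : Measure (ℝ × ℝ)) T = 0 := by
    rw [Measure.volume_eq_prod, Measure.prod_apply_symm hT]
    have h0 : ∀ y : ℝ, (volume : Measure ℝ) ((fun x => (x, y)) ⁻¹' T) = 0 := by
      intro y
      by_cases hy : y ∈ Set.Icc (0 : ℝ) 1
      · refine measure_mono_null ?_ ((h1 y hy).measure_zero volume)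
        intro x hx
        have := hTS hx
        exact ⟨this.2.1, this.1⟩
      · have he : (fun x : ℝ => (x, y)) ⁻¹' T = ∅ := by
          ext x
          simp only [Set.mem_preimage, Set.mem_empty_iff_false, iff_false]
          intro hx
          exact hy (hTS hx).2.2
        rw [he, measure_empty]
    simp [h0]
  rw [measure_congr hTe, Measure.volume_eq_prod] at hT0
  have hae := Measure.measure_ae_null_of_prod_null hT0
  have hnot : ∀ᵐ x : ℝ, x ∉ Set.Icc (0 : ℝ) 1 := by
    filter_upwards [hae] with x hx hxI
    have hu : (volume : Measure ℝ) (Set.Icc (0 : ℝ) 1) = 0 := by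
      refine measure_mono_null ?_ (measure_union_null hx ((h2 x hxI).measure_zero volume))
      intro y hy
      by_cases hA : (x, y) ∈ A
      · exact Or.inl ⟨hA, hxI, hy⟩
      · exact Or.inr ⟨hy, hA⟩
    simp at hu
  have hz : (volume : Measure ℝ) (Set.Icc (0 : ℝ) 1) = 0 := by
    simpa only [not_not] using measure_eq_zero_iff_ae_notMem.2 hnot
  simp at hz
end

section
/- Let K be a subfield of ℝ (an intermediate field of ℝ over ℚ) with [K : ℚ] = 4. Then the three real numbers 1, 2^{1/3}, 2^{1/5} are linearly independent over K (where ℝ is regarded as a K-vector space). -/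
lemma two_not_pow (p : ℕ) (hp : p.Prime) (b : ℚ) : b ^ p ≠ 2 := by
  intro h
  have hb : b ≠ 0 := by
    rintro rfl
    rw [zero_pow hp.ne_zero] at h
    norm_num at h
  have : Fact (Nat.Prime 2) := ⟨Nat.prime_two⟩
  have h1 : padicValRat 2 (b ^ p) = p * padicValRat 2 b := padicValRat.pow _
  have h2 : padicValRat 2 (2 : ℚ) = 1 := by
    have := padicValRat.self (p := 2) (by norm_num)
    exact_mod_cast this
  rw [h, h2] at h1
  have h3 : (p : ℤ) ∣ 1 := ⟨_, h1⟩
  have h4 : p ∣ 1 := by exact_mod_cast h3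
  exact hp.one_lt.ne' (Nat.dvd_one.mp h4)

lemma prime_dvd_finrank (L : Type*) [Field L] [Algebra ℚ L] [FiniteDimensional ℚ L]
    (p : ℕ) (hp : p.Prime) (x : L) (hx : x ^ p = 2) : p ∣ Module.finrank ℚ L := by
  have hirr : Irreducible (Polynomial.X ^ p - Polynomial.C (2 : ℚ)) :=
    X_pow_sub_C_irreducible_of_prime hp (two_not_pow p hp)
  have hm : Polynomial.X ^ p - Polynomial.C (2 : ℚ) = minpoly ℚ x := by
    apply minpoly.eq_of_irreducible_of_monic hirr
    · simp [hx]
    · exact Polynomial.monic_X_pow_sub_C _ hp.ne_zero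
  have hd := minpoly.degree_dvd (K := ℚ) (x := x) (Algebra.IsIntegral.isIntegral x)
  rwa [← hm, Polynomial.natDegree_X_pow_sub_C] at hd

/-- If `K` is a subfield of `ℝ` with `[K : ℚ] = 4`, then
`1, 2^{1/3}, 2^{1/5}` are linearly independent over `K`. -/
theorem stmt11 (K : IntermediateField ℚ ℝ) (hK : Module.finrank ℚ K = 4) :
    LinearIndependent K ![(1 : ℝ), (2 : ℝ) ^ ((1 : ℝ) / 3), (2 : ℝ) ^ ((1 : ℝ) / 5)] := by
  have hα : ((2 : ℝ) ^ ((1 : ℝ) / 3)) ^ 3 = 2 := by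
    rw [← Real.rpow_natCast, ← Real.rpow_mul (by norm_num)]; norm_num
  have hβ : ((2 : ℝ) ^ ((1 : ℝ) / 5)) ^ 5 = 2 := by
    rw [← Real.rpow_natCast, ← Real.rpow_mul (by norm_num)]; norm_num
  generalize (2 : ℝ) ^ ((1 : ℝ) / 3) = α at *
  generalize (2 : ℝ) ^ ((1 : ℝ) / 5) = β at *
  have : FiniteDimensional ℚ K := Module.finite_of_finrank_pos (by omega)
  have hαK : α ∉ K := by
    intro h
    have := prime_dvd_finrank K 3 Nat.prime_three ⟨α, h⟩ (Subtype.ext hα)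
    omega
  have hmon : (Polynomial.X ^ 3 - Polynomial.C (2 : K)).Monic :=
    Polynomial.monic_X_pow_sub_C _ (by norm_num)
  have haev : Polynomial.aeval α (Polynomial.X ^ 3 - Polynomial.C (2 : K)) = 0 := by
    have h2 : algebraMap K ℝ 2 = 2 := map_ofNat _ 2
    rw [map_sub, map_pow, Polynomial.aeval_X, Polynomial.aeval_C, h2, hα, sub_self]
  have hint : IsIntegral K α := ⟨_, hmon, by simpa [Polynomial.aeval_def] using haev⟩
  have hβL : β ∉ IntermediateField.adjoin K {α} := by
    intro h
    have : FiniteDimensional K (IntermediateField.adjoin K {α}) :=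
      IntermediateField.adjoin.finiteDimensional hint
    have : FiniteDimensional ℚ (IntermediateField.adjoin K {α}) :=
      FiniteDimensional.trans ℚ K _
    have h5 := prime_dvd_finrank (IntermediateField.adjoin K {α}) 5 Nat.prime_five ⟨β, h⟩
      (Subtype.ext hβ)
    have hmul := Module.finrank_mul_finrank ℚ K (IntermediateField.adjoin K {α})
    have hle : (minpoly K α).natDegree ≤ 3 := by
      have := Polynomial.natDegree_le_natDegree (minpoly.min K α hmon haev)
      rwa [Polynomial.natDegree_X_pow_sub_C] at this
    have hpos := minpoly.natDegree_pos hint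
    rw [IntermediateField.adjoin.finrank hint, hK] at hmul
    omega
  rw [Fintype.linearIndependent_iff]
  intro g hg
  simp only [Fin.sum_univ_three, Matrix.cons_val, Algebra.smul_def, mul_one] at hg
  have hc : g 2 = 0 := by
    by_contra hne
    apply hβL
    have hne' : algebraMap K ℝ (g 2) ≠ 0 := by simpa using hne
    have e : β = -(algebraMap K ℝ (g 0) + algebraMap K ℝ (g 1) * α) / algebraMap K ℝ (g 2) := by
      field_simp
      linarith
    rw [e]
    have hm := IntermediateField.mem_adjoin_simple_self K α
    have ha := fun k : K => (IntermediateField.adjoin K {α}).algebraMap_mem k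
    exact div_mem (neg_mem (add_mem (ha _) (mul_mem (ha _) hm))) (ha _)
  have hb : g 1 = 0 := by
    by_contra hne
    apply hαK
    have hne' : algebraMap K ℝ (g 1) ≠ 0 := by simpa using hne
    have e : α = -(algebraMap K ℝ (g 0)) / algebraMap K ℝ (g 1) := by
      rw [hc] at hg
      simp only [map_zero, zero_mul, add_zero] at hg
      field_simp
      linarith
    rw [e]
    exact div_mem (neg_mem (g 0).2) (g 1).2
  have ha : g 0 = 0 := by
    rw [hc, hb] at hg
    simpa using hg
  intro i
  fin_cases i
  · exact ha
  · exact hb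
  · exact hc
end

section
/- The real number 2·arccos(1/√(2 + 4^{1/3} + 4^{1/5})) is not a rational multiple of π: there is no rational number q such that 2·arccos(1/√(2 + 4^{1/3} + 4^{1/5})) = q·π. -/
lemma aux_irred : Irreducible (Polynomial.X ^ 3 - Polynomial.C (4 : ℚ)) := by
  apply X_pow_sub_C_irreducible_of_prime Nat.prime_three
  intro b hb
  have hb0 : b ≠ 0 := by rintro rfl; norm_num at hb
  have : Fact (Nat.Prime 2) := ⟨Nat.prime_two⟩
  have h := congrArg (padicValRat 2) hb
  rw [padicValRat.pow] at h
  have h4 : padicValRat 2 (4 : ℚ) = 2 := by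
    have : (4 : ℚ) = ((2 : ℕ) : ℚ) ^ 2 := by norm_num
    rw [this, padicValRat.pow, padicValRat.self (by norm_num)]; norm_num
  rw [h4] at h
  push_cast at h
  omega

lemma aux_main (z : ℂ) (n : ℕ) (hn : 0 < n) (hz : z ^ n = 1) (a b : ℝ) (ha0 : 0 < a)
    (ha : a ^ 3 = 4) (hb : b ^ 5 = 4)
    (h : (z + 1) ^ 2 * (2 + a + b) = 4 * z) : False := by
  have hac : (a : ℂ) ^ 3 = 4 := by exact_mod_cast ha
  have hbc : (b : ℂ) ^ 5 = 4 := by exact_mod_cast hb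
  have hmin : minpoly ℚ (a : ℂ) = Polynomial.X ^ 3 - Polynomial.C (4 : ℚ) := by
    symm
    apply minpoly.eq_of_irreducible_of_monic aux_irred
    · simp [hac]
    · exact Polynomial.monic_X_pow_sub_C _ (by norm_num)
  let L := algebraicClosure ℚ ℂ
  have hzL : z ∈ L := by
    rw [mem_algebraicClosure_iff]
    exact (IsIntegral.of_pow hn (by rw [hz]; exact isIntegral_one)).isAlgebraic
  have haL : (a : ℂ) ∈ L := by
    rw [mem_algebraicClosure_iff]
    refine (IsIntegral.of_pow (n := 3) (by norm_num) ?_).isAlgebraic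
    rw [hac]; exact isIntegral_algebraMap (R := ℚ) (x := 4)
  have hbL : (b : ℂ) ∈ L := by
    rw [mem_algebraicClosure_iff]
    refine (IsIntegral.of_pow (n := 5) (by norm_num) ?_).isAlgebraic
    rw [hbc]; exact isIntegral_algebraMap (R := ℚ) (x := 4)
  let z' : L := ⟨z, hzL⟩
  let a' : L := ⟨a, haL⟩
  let b' : L := ⟨b, hbL⟩
  have hz' : z' ^ n = 1 := Subtype.ext hz
  have hb' : b' ^ 5 = 4 := Subtype.ext hbc
  have h' : (z' + 1) ^ 2 * (2 + a' + b') = 4 * z' := Subtype.ext h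
  have hmin' : minpoly ℚ a' = Polynomial.X ^ 3 - Polynomial.C (4 : ℚ) := by
    rw [← hmin]
    exact (minpoly.algebraMap_eq (B' := ℂ) (algebraMap L ℂ).injective a').symm
  have h3 : ((√3 : ℝ) : ℂ) ^ 2 = 3 := by
    norm_cast; exact Real.sq_sqrt (by norm_num)
  let A : ℂ := a * (-1 / 2 + (√3 : ℝ) / 2 * Complex.I)
  have hA : A ^ 3 = 4 := by
    have : (-1 / 2 + ((√3 : ℝ) : ℂ) / 2 * Complex.I) ^ 3 = 1 := by
      have hI := Complex.I_sq
      generalize ((√3 : ℝ) : ℂ) = r at *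
      have e : (r * Complex.I) ^ 2 = -3 := by rw [mul_pow, h3, hI]; ring
      linear_combination (-3 / 8 + r * Complex.I / 8) * e
    rw [show A ^ 3 = (a : ℂ) ^ 3 * (-1 / 2 + ((√3 : ℝ) : ℂ) / 2 * Complex.I) ^ 3 from mul_pow _ _ _,
      this, hac, mul_one]
  have hmem : A ∈ (minpoly ℚ a').rootSet ℂ := by
    rw [hmin', Polynomial.mem_rootSet]
    refine ⟨aux_irred.ne_zero, ?_⟩
    simp [hA]
  have hLalg : Algebra.IsAlgebraic ℚ L := algebraicClosure.isAlgebraic ℚ ℂ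
  rw [← Algebra.IsAlgebraic.range_eval_eq_rootSet_minpoly (F := ℚ) (K := L) ℂ a'] at hmem
  obtain ⟨φ, hφ⟩ := hmem
  have hφ : φ a' = A := hφ
  have hw := congrArg φ hz'
  have hB := congrArg φ hb'
  have hS := congrArg φ h'
  simp only [map_mul, map_pow, map_add, map_one, map_ofNat, hφ] at hw hB hS
  generalize φ z' = w at *
  generalize φ b' = B at *
  have hw1 : ‖w‖ = 1 := Complex.norm_eq_one_of_pow_eq_one hw hn.ne'
  have hw0 : w ≠ 0 := by rintro rfl; simp at hw1
  have hcw : (starRingEnd ℂ) w = w⁻¹ := (Complex.inv_eq_conj hw1).symm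
  have hwp : w + 1 ≠ 0 := by
    intro h0
    rw [h0] at hS
    simp [hw0] at hS
  have hc := congrArg (starRingEnd ℂ) hS
  rw [map_mul, map_pow, map_add, map_mul, hcw, map_one, map_ofNat] at hc
  have hreal : (starRingEnd ℂ) (2 + A + B) = 2 + A + B := by
    generalize (starRingEnd ℂ) (2 + A + B) = T at *
    have : (w + 1) ^ 2 * T = 4 * w := by
      field_simp at hc
      linear_combination hc
    exact mul_left_cancel₀ (pow_ne_zero 2 hwp) (this.trans hS.symm)
  have him := Complex.conj_eq_iff_im.mp hreal
  have hAim : A.im = a * (√3 / 2) := by simp [A]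
  have him' : A.im + B.im = 0 := by simpa using him
  have hBn : ‖B‖ ^ 5 = 4 := by rw [← norm_pow, hB]; simp
  have hBlt : ‖B‖ < 1.32 := by
    apply lt_of_pow_lt_pow_left₀ 5 (by norm_num)
    rw [hBn]; norm_num
  have halt : 1.58 < a := by
    apply lt_of_pow_lt_pow_left₀ 3 ha0.le
    rw [ha]; norm_num
  have h3lt : 1.73 < √3 := by
    apply Real.lt_sqrt_of_sq_lt; norm_num
  have := Complex.abs_im_le_norm B
  have := neg_abs_le B.im
  nlinarith

/-- `2·arccos(1/√(2 + 4^{1/3} + 4^{1/5}))` is not a rational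
multiple of `π`. -/
theorem stmt12 :
    ¬ ∃ q : ℚ,
      2 * Real.arccos (1 / Real.sqrt (2 + (4 : ℝ) ^ ((1 : ℝ) / 3) + (4 : ℝ) ^ ((1 : ℝ) / 5)))
        = (q : ℝ) * Real.pi := by
  rintro ⟨q, hq⟩
  have ha0 : 0 < (4 : ℝ) ^ ((1 : ℝ) / 3) := by positivity
  have hb0 : 0 < (4 : ℝ) ^ ((1 : ℝ) / 5) := by positivity
  have ha : ((4 : ℝ) ^ ((1 : ℝ) / 3)) ^ 3 = 4 := by
    rw [← Real.rpow_natCast, ← Real.rpow_mul (by norm_num)]; norm_num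
  have hb : ((4 : ℝ) ^ ((1 : ℝ) / 5)) ^ 5 = 4 := by
    rw [← Real.rpow_natCast, ← Real.rpow_mul (by norm_num)]; norm_num
  generalize (4 : ℝ) ^ ((1 : ℝ) / 3) = a at *
  generalize (4 : ℝ) ^ ((1 : ℝ) / 5) = b at *
  have hs : 0 < 2 + a + b := by positivity
  have hcos : Real.cos (q * Real.pi) = 2 / (2 + a + b) - 1 := by
    have h1 : 1 ≤ √(2 + a + b) := by
      rw [Real.one_le_sqrt]; linarith
    have h2 : 1 / √(2 + a + b) ≤ 1 := by
      rw [div_le_one (by linarith)]; exact h1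
    have h3 : 0 ≤ 1 / √(2 + a + b) := by positivity
    rw [← hq, Real.cos_two_mul, Real.cos_arccos (by linarith) h2, div_pow, Real.sq_sqrt hs.le]
    ring
  have hz : Complex.exp ((q * Real.pi : ℝ) * Complex.I) ^ (2 * q.den) = 1 := by
    rw [← Complex.exp_nat_mul, Complex.exp_eq_one_iff]
    refine ⟨q.num, ?_⟩
    have : (q : ℂ) * q.den = q.num := by exact_mod_cast Rat.mul_den_eq_num q
    push_cast
    linear_combination 2 * Real.pi * Complex.I * this
  refine aux_main _ _ (by have := q.den_pos; omega) hz a b ha0 ha hb ?_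
  have hc : (Complex.cos ((q * Real.pi : ℝ) : ℂ)) = 2 / (2 + a + b) - 1 := by
    rw [← Complex.ofReal_cos, hcos]; push_cast; ring
  have hsc : (2 + a + b : ℂ) ≠ 0 := by exact_mod_cast hs.ne'
  have hsc2 := Complex.sin_sq_add_cos_sq ((q * Real.pi : ℝ) : ℂ)
  rw [Complex.exp_mul_I]
  generalize Complex.cos ((q * Real.pi : ℝ) : ℂ) = c at *
  generalize Complex.sin ((q * Real.pi : ℝ) : ℂ) = s at *
  have hc' : (c + 1) * (2 + a + b) = 2 := by rw [hc]; field_simp; ring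
  have e : (c + s * Complex.I + 1) ^ 2 = 2 * (c + s * Complex.I) * (c + 1) := by
    linear_combination s ^ 2 * Complex.I_sq - hsc2
  rw [e]
  linear_combination 2 * (c + s * Complex.I) * hc'
end

section
/- Let v = (1, 2^{1/3}, 2^{1/5}) ∈ ℝ³. If x and y are distinct unit vectors in ℝ³ (Euclidean norm 1) each of which is a real scalar multiple of a vector with rational coordinates, then the Euclidean inner products ⟨x, v⟩ and ⟨y, v⟩ are distinct: x_1 + x_2·2^{1/3} + x_3·2^{1/5} ≠ y_1 + y_2·2^{1/3} + y_3·2^{1/5}. -/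
theorem irr15 : Irreducible (Polynomial.X ^ 15 - Polynomial.C (2 : ℚ)) := by
  refine (X_pow_sub_C_irreducible_iff_of_odd (by decide)).2 ?_
  intro p hp hp1 b hb
  have : Fact (Nat.Prime 2) := ⟨Nat.prime_two⟩
  have hb0 : b ≠ 0 := by
    rintro rfl
    rw [zero_pow (by rintro rfl; norm_num at hp)] at hb
    norm_num at hb
  have h := congrArg (padicValRat 2) hb
  rw [padicValRat.pow] at h
  have h2 : padicValRat 2 (2 : ℚ) = 1 := by
    simpa using padicValRat.self (p := 2) (by norm_num)
  rw [h2] at h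
  have h3 : (p : ℤ) ∣ 1 := ⟨_, h.symm⟩
  have h4 : p ∣ 1 := by exact_mod_cast h3
  exact hp1 (Nat.dvd_one.1 h4)

open Polynomial in
theorem indep15 (t : ℝ) (ht : t ^ 15 = 2) (a b c d e f : ℚ)
    (h : (a : ℝ) + b * t ^ 3 + c * t ^ 5 + d * t ^ 6 + e * t ^ 8 + f * t ^ 10 = 0) :
    a = 0 ∧ b = 0 ∧ c = 0 ∧ d = 0 ∧ e = 0 ∧ f = 0 := by
  have hm : (X ^ 15 - C (2 : ℚ)) = minpoly ℚ t := by
    refine minpoly.eq_of_irreducible_of_monic irr15 ?_ (monic_X_pow_sub_C _ (by norm_num))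
    simp [ht]
  set P : ℚ[X] := C a + C b * X ^ 3 + C c * X ^ 5 + C d * X ^ 6 + C e * X ^ 8 + C f * X ^ 10 with hP
  have hroot : aeval t P = 0 := by simpa [hP] using h
  have hP0 : P = 0 := by
    refine eq_zero_of_dvd_of_natDegree_lt (minpoly.dvd ℚ t hroot) ?_
    rw [← hm, natDegree_X_pow_sub_C]
    have : P.natDegree ≤ 10 := by rw [hP]; compute_degree
    omega
  have hc : ∀ n, P.coeff n = 0 := fun n => by rw [hP0]; simp
  have h0 := hc 0
  have h3 := hc 3
  have h5 := hc 5
  have h6 := hc 6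
  have h8 := hc 8
  have h10 := hc 10
  simp [hP, coeff_X_pow, coeff_C] at h0 h3 h5 h6 h8 h10
  exact ⟨h0, h3, h5, h6, h8, h10⟩

theorem sq_scal (x : EuclideanSpace ℝ (Fin 3)) (hx : ‖x‖ = 1) (c : ℝ) (q : Fin 3 → ℚ)
    (h : ∀ i, x i = c * (q i : ℝ)) : ∃ r : ℚ, c ^ 2 = r := by
  have h1 : ‖x‖ ^ 2 = 1 := by rw [hx]; norm_num
  rw [EuclideanSpace.real_norm_sq_eq, Fin.sum_univ_three, h, h, h] at h1
  refine ⟨1 / (q 0 ^ 2 + q 1 ^ 2 + q 2 ^ 2), ?_⟩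
  push_cast
  have h2 : c ^ 2 * ((q 0 : ℝ) ^ 2 + (q 1 : ℝ) ^ 2 + (q 2 : ℝ) ^ 2) = 1 := by linarith
  exact eq_one_div_of_mul_eq_one_left h2

/-- if `x ≠ y` are unit vectors in `ℝ³`, each a real scalar multiple
of a rational vector, then their Euclidean inner products with
`v = (1, 2^{1/3}, 2^{1/5})` differ. -/
theorem stmt15 (x y : EuclideanSpace ℝ (Fin 3))
    (hx : ‖x‖ = 1) (hy : ‖y‖ = 1) (hxy : x ≠ y)
    (hxq : ∃ (c : ℝ) (q : Fin 3 → ℚ), ∀ i, x i = c * (q i : ℝ))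
    (hyq : ∃ (c : ℝ) (q : Fin 3 → ℚ), ∀ i, y i = c * (q i : ℝ)) :
    x 0 + x 1 * (2 : ℝ) ^ ((1 : ℝ) / 3) + x 2 * (2 : ℝ) ^ ((1 : ℝ) / 5) ≠
      y 0 + y 1 * (2 : ℝ) ^ ((1 : ℝ) / 3) + y 2 * (2 : ℝ) ^ ((1 : ℝ) / 5) := by
  obtain ⟨c, q, hq⟩ := hxq
  obtain ⟨d, p, hp⟩ := hyq
  obtain ⟨r, hr⟩ := sq_scal x hx c q hq
  obtain ⟨s, hs⟩ := sq_scal y hy d p hp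
  obtain ⟨t, htdef⟩ : ∃ t : ℝ, t = (2 : ℝ) ^ ((1 : ℝ) / 15) := ⟨_, rfl⟩
  have ht : t ^ 15 = 2 := by
    rw [htdef, ← Real.rpow_natCast, ← Real.rpow_mul (by norm_num)]; norm_num
  have h3 : (2 : ℝ) ^ ((1 : ℝ) / 3) = t ^ 5 := by
    rw [htdef, ← Real.rpow_natCast, ← Real.rpow_mul (by norm_num)]; norm_num
  have h5 : (2 : ℝ) ^ ((1 : ℝ) / 5) = t ^ 3 := by
    rw [htdef, ← Real.rpow_natCast, ← Real.rpow_mul (by norm_num)]; norm_num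
  rw [h3, h5]
  intro heq
  have hsq : (x 0 + x 1 * t ^ 5 + x 2 * t ^ 3) ^ 2 = (y 0 + y 1 * t ^ 5 + y 2 * t ^ 3) ^ 2 := by
    rw [heq]
  have key := indep15 t ht (r * (q 0 * q 0) - s * (p 0 * p 0))
    (2 * (r * (q 0 * q 2) - s * (p 0 * p 2))) (2 * (r * (q 0 * q 1) - s * (p 0 * p 1)))
    (r * (q 2 * q 2) - s * (p 2 * p 2)) (2 * (r * (q 1 * q 2) - s * (p 1 * p 2)))
    (r * (q 1 * q 1) - s * (p 1 * p 1)) (by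
      push_cast
      rw [← hr, ← hs]
      simp only [hq, hp] at hsq
      linear_combination hsq)
  obtain ⟨k00, k02, k01, k22, k12, k11⟩ := key
  have conv : ∀ i j, r * (q i * q j) - s * (p i * p j) = 0 → x i * x j = y i * y j := by
    intro i j h
    have h' : (r : ℝ) * (q i * q j) - s * (p i * p j) = 0 := by exact_mod_cast h
    rw [← hr, ← hs] at h'
    rw [hq, hq, hp, hp]
    linear_combination h'
  have e00 := conv 0 0 k00
  have e02 := conv 0 2 (by linarith)
  have e01 := conv 0 1 (by linarith)
  have e22 := conv 2 2 k22
  have e12 := conv 1 2 (by linarith)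
  have e11 := conv 1 1 k11
  by_cases hS : x 0 + x 1 * t ^ 5 + x 2 * t ^ 3 = 0
  · have hc : c ≠ 0 := by
      rintro rfl
      have : x = 0 := by ext i; simp [hq]
      simp [this] at hx
    have hz : (q 0 : ℝ) + q 1 * t ^ 5 + q 2 * t ^ 3 = 0 := by
      apply mul_left_cancel₀ hc
      simp only [hq] at hS
      linear_combination hS
    obtain ⟨z0, z2, z1, -⟩ := indep15 t ht (q 0) (q 2) (q 1) 0 0 0 (by
      push_cast; linear_combination hz)
    have : x = 0 := by
      ext i
      fin_cases i <;> simp [hq, z0, z1, z2]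
    simp [this] at hx
  · apply hxy
    ext i
    apply mul_right_cancel₀ hS
    fin_cases i
    · show x 0 * _ = y 0 * _
      linear_combination e00 + e01 * t ^ 5 + e02 * t ^ 3 - y 0 * heq
    · show x 1 * _ = y 1 * _
      linear_combination e01 + e11 * t ^ 5 + e12 * t ^ 3 - y 1 * heq
    · show x 2 * _ = y 2 * _
      linear_combination e02 + e12 * t ^ 5 + e22 * t ^ 3 - y 2 * heq
end

section
/- Let n, k ∈ ℕ and let g : (ℝⁿ) × ℝ × ℝᵏ → ℝ be an arbitrary real-valued function. Then for every x̄ ∈ ℝⁿ, the following identity holds in the extended reals ℝ̄: inf_{y ∈ ℤ} sup_{z̄ ∈ ℤᵏ} g(x̄, y, z̄) = inf_{y ∈ ℝ} sup_{(β, z̄) ∈ ℝ × ℝᵏ} inf_{γ ∈ ℝ} [ g(x̄, y, z̄) + β²·sin²(π y) − γ²·Σ_{i=1}^{k} sin²(π z_i) ], where on the left-hand side y ranges over the integers and z̄ over integer vectors (coerced into ℝ and ℝᵏ). -/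
open scoped BigOperators

lemma sin_pi_int (m : ℤ) : Real.sin (Real.pi * (m : ℝ)) = 0 := by
  rw [mul_comm]; exact Real.sin_int_mul_pi m

lemma int_of_sin_pi {y : ℝ} (h : Real.sin (Real.pi * y) = 0) : ∃ m : ℤ, (m : ℝ) = y := by
  obtain ⟨m, hm⟩ := Real.sin_eq_zero_iff.1 h
  refine ⟨m, ?_⟩
  rw [mul_comm] at hm
  exact mul_left_cancel₀ Real.pi_ne_zero hm

lemma exists_sq_mul_gt (c : ℝ) {s : ℝ} (hs : 0 < s) : ∃ b : ℝ, c < b ^ 2 * s := by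
  refine ⟨Real.sqrt ((|c| + 1) / s), ?_⟩
  rw [Real.sq_sqrt (by positivity), div_mul_cancel₀ _ hs.ne']
  linarith [le_abs_self c]

/-- for any `g : ℝⁿ × ℝ × ℝᵏ → ℝ` and `x̄ ∈ ℝⁿ`, in the extended
reals `inf_{y ∈ ℤ} sup_{z̄ ∈ ℤᵏ} g(x̄,y,z̄)` equals
`inf_{y ∈ ℝ} sup_{(β,z̄) ∈ ℝ × ℝᵏ} inf_{γ ∈ ℝ}
  [g(x̄,y,z̄) + β²·sin²(πy) − γ²·Σᵢ sin²(π zᵢ)]`. -/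
theorem stmt17 (n k : ℕ) (g : (Fin n → ℝ) → ℝ → (Fin k → ℝ) → ℝ) (x : Fin n → ℝ) :
    (⨅ y : ℤ, ⨆ z : Fin k → ℤ, ((g x (y : ℝ) fun i => (z i : ℝ) : ℝ) : EReal)) =
      ⨅ y : ℝ, ⨆ p : ℝ × (Fin k → ℝ), ⨅ γ : ℝ,
        ((g x y p.2 + p.1 ^ 2 * Real.sin (Real.pi * y) ^ 2 -
            γ ^ 2 * ∑ i : Fin k, Real.sin (Real.pi * p.2 i) ^ 2 : ℝ) : EReal) := by
  apply le_antisymm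
  · refine le_iInf fun y => ?_
    by_cases hy : Real.sin (Real.pi * y) = 0
    · obtain ⟨m, rfl⟩ := int_of_sin_pi hy
      refine iInf_le_of_le m (iSup_le fun z => ?_)
      refine le_iSup_of_le (0, fun i => (z i : ℝ)) (le_iInf fun γ => ?_)
      simp [sin_pi_int]
    · refine le_trans le_top (top_le_iff.2 ?_)
      rw [EReal.eq_top_iff_forall_lt]
      intro c
      have hs : 0 < Real.sin (Real.pi * y) ^ 2 := by positivity
      obtain ⟨b, hb⟩ := exists_sq_mul_gt (c - g x y (fun _ => 0)) hs
      refine lt_of_lt_of_le (b := ((g x y (fun _ => 0) + b ^ 2 * Real.sin (Real.pi * y) ^ 2 : ℝ) : EReal))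
        (EReal.coe_lt_coe_iff.2 (by linarith)) ?_
      refine le_iSup_of_le (b, fun _ => 0) (le_iInf fun γ => ?_)
      rw [EReal.coe_le_coe_iff]
      simp
  · refine le_iInf fun m => iInf_le_of_le (m : ℝ) (iSup_le fun p => ?_)
    obtain ⟨b, w⟩ := p
    by_cases hw : ∀ i, Real.sin (Real.pi * w i) = 0
    · choose z hz using fun i => int_of_sin_pi (hw i)
      obtain rfl : (fun i => (z i : ℝ)) = w := funext hz
      refine le_iSup_of_le z (iInf_le_of_le 0 ?_)
      rw [EReal.coe_le_coe_iff]
      simp [sin_pi_int]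
    · push Not at hw
      obtain ⟨i, hi⟩ := hw
      have hs : 0 < ∑ i : Fin k, Real.sin (Real.pi * w i) ^ 2 :=
        Finset.sum_pos' (fun _ _ => sq_nonneg _) ⟨i, Finset.mem_univ _, by positivity⟩
      refine le_trans (le_bot_iff.2 ?_) bot_le
      rw [EReal.eq_bot_iff_forall_lt]
      intro c
      obtain ⟨γ, hγ⟩ := exists_sq_mul_gt (g x m w - c) hs
      refine lt_of_le_of_lt (iInf_le _ γ) (EReal.coe_lt_coe_iff.2 ?_)
      simp only [sin_pi_int]
      linarith
end

section
/- Let k ∈ ℕ and let U₀ ⊆ ℝᵏ × ℕ be a set such that for every n ∈ ℕ the section {x̄ ∈ ℝᵏ : (x̄, n) ∈ U₀} is open (i.e. U₀ is open in ℝᵏ × ℕ with ℕ discrete). Then there exists an open set U ⊆ ℝᵏ × ℝ such that for every x̄ ∈ ℝᵏ: ((x̄, n) ∈ U₀ for every n ∈ ℕ) if and only if ((x̄, y) ∈ U for every y ∈ ℝ). -/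
/-- if `U₀ ⊆ ℝᵏ × ℕ` has all sections over `n ∈ ℕ` open (i.e. `U₀`
is open for the product topology with `ℕ` discrete), then there is an open
`U ⊆ ℝᵏ × ℝ` such that for all `x̄`: `(x̄, n) ∈ U₀` for all `n ∈ ℕ` iff
`(x̄, y) ∈ U` for all `y ∈ ℝ`. -/
theorem stmt18 (k : ℕ) (U₀ : Set ((Fin k → ℝ) × ℕ))
    (h : ∀ n : ℕ, IsOpen {x : Fin k → ℝ | (x, n) ∈ U₀}) :
    ∃ U : Set ((Fin k → ℝ) × ℝ), IsOpen U ∧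
      ∀ x : Fin k → ℝ, (∀ n : ℕ, (x, n) ∈ U₀) ↔ (∀ y : ℝ, (x, y) ∈ U) := by
  refine ⟨(Prod.snd ⁻¹' (Set.range ((↑) : ℕ → ℝ))ᶜ) ∪
    ⋃ n : ℕ, {x : Fin k → ℝ | (x, n) ∈ U₀} ×ˢ Metric.ball (n : ℝ) 1, ?_, ?_⟩
  · refine IsOpen.union ?_ (isOpen_iUnion fun n => (h n).prod Metric.isOpen_ball)
    exact (Nat.isClosedEmbedding_coe_real.isClosed_range.isOpen_compl).preimage continuous_snd
  · intro x
    constructor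
    · intro hx y
      by_cases hy : y ∈ Set.range ((↑) : ℕ → ℝ)
      · obtain ⟨n, rfl⟩ := hy
        exact Or.inr (Set.mem_iUnion.2 ⟨n, hx n, Metric.mem_ball_self one_pos⟩)
      · exact Or.inl hy
    · intro hx n
      rcases hx n with h1 | h1
      · exact absurd ⟨n, rfl⟩ h1
      · obtain ⟨m, hm, hb⟩ := Set.mem_iUnion.1 h1
        have hb' : |(n : ℝ) - m| < 1 := by
          simpa [Metric.mem_ball, Real.dist_eq] using hb
        obtain ⟨h2, h3⟩ := abs_lt.1 hb'
        have h4 : n < m + 1 := by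
          have : (n : ℝ) < m + 1 := by linarith
          exact_mod_cast this
        have h5 : m < n + 1 := by
          have : (m : ℝ) < n + 1 := by linarith
          exact_mod_cast this
        have h6 : n = m := by omega
        subst h6
        exact hm
end

section
/- For every n ∈ ℕ and every open set U ⊆ ℝⁿ, there is a function g : ℝⁿ × ℝ → ℝ that is real-analytic on all of ℝⁿ × ℝ such that for every x̄ ∈ ℝⁿ, the supremum sup_{y ∈ ℝ} g(x̄, y), computed in the extended reals ℝ̄, equals the indicator function value 1_U(x̄) (that is, it equals 1 if x̄ ∈ U and 0 if x̄ ∉ U). -/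
open BoundedContinuousFunction in
/-- A weighted sum of exponentials with bounded exponents is analytic. -/
theorem analytic_sum_aux {E : Type*} [NormedAddCommGroup E] [NormedSpace ℝ E]
    (V : E → (ℕ →ᵇ ℝ)) (hV : ∀ p, AnalyticAt ℝ V p) (w : ℕ → ℝ)
    (hw : ∀ k, |w k| ≤ (1 / 2 : ℝ) ^ k) (p : E) :
    AnalyticAt ℝ (fun p => ∑' k, w k * Real.exp (V p k)) p := by
  have hs : ∀ f : ℕ →ᵇ ℝ, ∀ k, ‖w k * f k‖ ≤ (1 / 2 : ℝ) ^ k * ‖f‖ := by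
    intro f k
    rw [norm_mul]
    exact mul_le_mul (hw k) (f.norm_coe_le_norm k) (norm_nonneg _) (by positivity)
  have hsum : ∀ f : ℕ →ᵇ ℝ, Summable (fun k => w k * f k) := fun f =>
    Summable.of_norm_bounded (summable_geometric_two.mul_right ‖f‖) (hs f)
  let L0 : (ℕ →ᵇ ℝ) →ₗ[ℝ] ℝ :=
    { toFun := fun f => ∑' k, w k * f k
      map_add' := by
        intro f g
        rw [← (hsum f).tsum_add (hsum g)]
        congr 1
        ext k
        simp [mul_add]
      map_smul' := by
        intro c f
        simp only [RingHom.id_apply, smul_eq_mul]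
        rw [← tsum_mul_left]
        congr 1
        ext k
        simp
        ring }
  let L : (ℕ →ᵇ ℝ) →L[ℝ] ℝ := L0.mkContinuous 2 (by
    intro f
    change ‖∑' k, w k * f k‖ ≤ _
    refine tsum_of_norm_bounded ?_ (hs f)
    exact hasSum_geometric_two.mul_right _)
  have hexp : ∀ f : ℕ →ᵇ ℝ, ∀ k, (NormedSpace.exp f) k = Real.exp (f k) := by
    intro f k
    let ev : (ℕ →ᵇ ℝ) →+* ℝ :=
      { toFun := fun f => f k
        map_one' := rfl
        map_mul' := fun _ _ => rfl
        map_zero' := rfl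
        map_add' := fun _ _ => rfl }
    have h := NormedSpace.map_exp ev
      (show Continuous ev from (BoundedContinuousFunction.evalCLM ℝ k).continuous) f
    rw [Real.exp_eq_exp_ℝ]
    exact h
  have heq : (fun p => ∑' k, w k * Real.exp (V p k)) = fun p => L (NormedSpace.exp (V p)) := by
    ext p
    change _ = ∑' k, w k * (NormedSpace.exp (V p)) k
    simp only [hexp]
  rw [heq]
  exact (L.analyticAt _).comp ((NormedSpace.exp_analytic (𝕂 := ℝ) (V p)).comp (hV p))

/-- The key function. -/
theorem key_aux (n : ℕ) (U : Set (Fin n → ℝ)) (hU : IsOpen U) :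
    ∃ S : ((Fin n → ℝ) × ℝ) → ℝ, (∀ p, AnalyticAt ℝ S p) ∧ (∀ p, 0 ≤ S p) ∧
      (∀ x, x ∉ U → ∀ y, S (x, y) ≤ 2) ∧
      (∀ x, x ∈ U → ∃ a > 0, ∃ b > 0, ∀ y, a * Real.exp (b * y ^ 2) ≤ S (x, y)) := by
  classical
  let D : ℕ → (Fin n → ℝ) × ℝ := TopologicalSpace.denseSeq _
  let N : ℕ → ℝ := fun k => 1 + |(D k).2| + ∑ i, (D k).1 i ^ 2
  have hss : ∀ k, 0 ≤ ∑ i, (D k).1 i ^ 2 := fun k =>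
    Finset.sum_nonneg fun i _ => sq_nonneg _
  have hN : ∀ k, 1 ≤ N k := fun k => by
    have := hss k
    have := abs_nonneg (D k).2
    simp only [N]
    linarith
  have hN0 : ∀ k, 0 < N k := fun k => lt_of_lt_of_le one_pos (hN k)
  let q : ℕ → (Fin n → ℝ) → ℝ := fun k x => (D k).2 - ∑ i, (x i - (D k).1 i) ^ 2
  let A : BoundedContinuousFunction ℕ ℝ :=
    BoundedContinuousFunction.ofNormedAddCommGroupDiscrete
      (fun k => ((D k).2 - ∑ i, (D k).1 i ^ 2) / N k) 1 (by
        intro k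
        rw [Real.norm_eq_abs, abs_div, abs_of_pos (hN0 k), div_le_one (hN0 k)]
        have h1 := hss k
        have h2 := abs_sub (D k).2 (∑ i, (D k).1 i ^ 2)
        rw [abs_of_nonneg h1] at h2
        simp only [N]
        linarith)
  let C : Fin n → BoundedContinuousFunction ℕ ℝ := fun i =>
    BoundedContinuousFunction.ofNormedAddCommGroupDiscrete
      (fun k => (2 * (D k).1 i) / N k) 1 (by
        intro k
        rw [Real.norm_eq_abs, abs_div, abs_of_pos (hN0 k), div_le_one (hN0 k)]
        have h1 := Finset.single_le_sum (f := fun i => (D k).1 i ^ 2)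
          (fun i _ => sq_nonneg _) (Finset.mem_univ i)
        have h2 := abs_nonneg (D k).2
        simp only [N]
        rw [abs_le]
        constructor
        · nlinarith [sq_nonneg ((D k).1 i + 1)]
        · nlinarith [sq_nonneg ((D k).1 i - 1)])
  let B : BoundedContinuousFunction ℕ ℝ :=
    BoundedContinuousFunction.ofNormedAddCommGroupDiscrete
      (fun k => 1 / N k) 1 (by
        intro k
        rw [Real.norm_eq_abs, abs_div, abs_of_pos (hN0 k), div_le_one (hN0 k), abs_one]
        exact hN k)
  let V : ((Fin n → ℝ) × ℝ) → BoundedContinuousFunction ℕ ℝ := fun p =>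
    (p.2 ^ 2) • A + ∑ i, (p.2 ^ 2 * p.1 i) • C i - (p.2 ^ 2 * ∑ i, p.1 i ^ 2) • B
  have hVk : ∀ x y k, V (x, y) k = q k x / N k * y ^ 2 := by
    intro x y k
    have h1 : V (x, y) k = y ^ 2 * (((D k).2 - ∑ i, (D k).1 i ^ 2) / N k)
        + ∑ i, (y ^ 2 * x i) * ((2 * (D k).1 i) / N k) - (y ^ 2 * ∑ i, x i ^ 2) * (1 / N k) := by
      simp [V, A, B, C]
    rw [h1]
    have h2 : ∑ i, (x i - (D k).1 i) ^ 2 =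
        ∑ i, x i ^ 2 - ∑ i, 2 * x i * (D k).1 i + ∑ i, (D k).1 i ^ 2 := by
      rw [← Finset.sum_sub_distrib, ← Finset.sum_add_distrib]
      exact Finset.sum_congr rfl fun i _ => by ring
    have h3 : ∑ i, (y ^ 2 * x i) * ((2 * (D k).1 i) / N k) =
        y ^ 2 / N k * ∑ i, 2 * x i * (D k).1 i := by
      rw [Finset.mul_sum]
      exact Finset.sum_congr rfl fun i _ => by ring
    simp only [q]
    rw [h2, h3]
    ring
  have hc1 : ∀ p : (Fin n → ℝ) × ℝ, ∀ i, AnalyticAt ℝ (fun p : (Fin n → ℝ) × ℝ => p.1 i) p :=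
    fun p i => ((ContinuousLinearMap.proj (R := ℝ) (φ := fun _ : Fin n => ℝ) i).comp
      (ContinuousLinearMap.fst ℝ (Fin n → ℝ) ℝ)).analyticAt p
  have hc2 : ∀ p : (Fin n → ℝ) × ℝ, AnalyticAt ℝ (fun p : (Fin n → ℝ) × ℝ => p.2) p :=
    fun p => analyticAt_snd
  have hV : ∀ p, AnalyticAt ℝ V p := by
    intro p
    refine ((((hc2 p).pow 2).smul analyticAt_const).add ?_).sub
      ((((hc2 p).pow 2).mul ?_).smul analyticAt_const)
    · exact Finset.analyticAt_fun_sum _ fun i _ =>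
        (((hc2 p).pow 2).mul (hc1 p i)).smul analyticAt_const
    · exact Finset.analyticAt_fun_sum _ fun i _ => (hc1 p i).pow 2
  let w : ℕ → ℝ := fun k => if ∀ x, 0 < q k x → x ∈ U then (1 / 2 : ℝ) ^ k else 0
  have hw0 : ∀ k, 0 ≤ w k := fun k => by
    simp only [w]
    split_ifs <;> positivity
  have hw1 : ∀ k, w k ≤ (1 / 2 : ℝ) ^ k := fun k => by
    simp only [w]
    split_ifs
    · exact le_rfl
    · positivity
  have hterm : ∀ p k, 0 ≤ w k * Real.exp (V p k) := fun p k =>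
    mul_nonneg (hw0 k) (Real.exp_pos _).le
  refine ⟨fun p => ∑' k, w k * Real.exp (V p k),
    analytic_sum_aux V hV w (fun k => by rw [abs_of_nonneg (hw0 k)]; exact hw1 k),
    fun p => tsum_nonneg (hterm p), ?_, ?_⟩
  · intro x hx y
    have hle : ∀ k, w k * Real.exp (V (x, y) k) ≤ (1 / 2 : ℝ) ^ k := by
      intro k
      by_cases hk : ∀ x, 0 < q k x → x ∈ U
      · have hq : q k x ≤ 0 := not_lt.mp fun h => hx (hk x h)
        have : V (x, y) k ≤ 0 := by
          rw [hVk]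
          exact mul_nonpos_of_nonpos_of_nonneg
            (div_nonpos_of_nonpos_of_nonneg hq (hN0 k).le) (sq_nonneg y)
        calc w k * Real.exp (V (x, y) k) ≤ w k * 1 :=
              mul_le_mul_of_nonneg_left (Real.exp_le_one_iff.mpr this) (hw0 k)
          _ ≤ _ := by rw [mul_one]; exact hw1 k
      · have : w k = 0 := if_neg hk
        rw [this, zero_mul]
        positivity
    have hs := Summable.of_nonneg_of_le (hterm (x, y)) hle summable_geometric_two
    exact (hs.tsum_le_tsum hle summable_geometric_two).trans_eq tsum_geometric_two
  · intro x hx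
    obtain ⟨ε, hε, hball⟩ := Metric.isOpen_iff.mp hU x hx
    let O : Set ((Fin n → ℝ) × ℝ) :=
      {d | ∑ i, (x i - d.1 i) ^ 2 < d.2 ∧ d.2 < (ε / 2) ^ 2}
    have hO : IsOpen O := by
      refine (isOpen_lt ?_ continuous_snd).inter (isOpen_lt continuous_snd continuous_const)
      fun_prop
    have hOne : O.Nonempty := ⟨(x, (ε / 2) ^ 2 / 2), by
      have : 0 < (ε / 2) ^ 2 := by positivity
      constructor
      · simpa using this
      · change (ε / 2) ^ 2 / 2 < (ε / 2) ^ 2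
        linarith⟩
    obtain ⟨k, hk⟩ := (TopologicalSpace.denseRange_denseSeq ((Fin n → ℝ) × ℝ)).exists_mem_open
      hO hOne
    change D k ∈ O at hk
    obtain ⟨hk1, hk2⟩ := hk
    have hclose : ∀ z, 0 < q k z → ∀ i, |z i - (D k).1 i| < ε / 2 := by
      intro z hz i
      have h1 := Finset.single_le_sum (f := fun i => (z i - (D k).1 i) ^ 2)
          (fun i _ => sq_nonneg _) (Finset.mem_univ i)
      simp only [q] at hz
      exact abs_lt_of_sq_lt_sq (by linarith) (by positivity)
    have hqx : 0 < q k x := by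
      simp only [q]
      linarith
    have hgood : ∀ z, 0 < q k z → z ∈ U := by
      intro z hz
      apply hball
      rw [Metric.mem_ball, dist_pi_lt_iff hε]
      intro i
      have h1 := abs_lt.mp (hclose z hz i)
      have h2 := abs_lt.mp (hclose x hqx i)
      rw [Real.dist_eq, abs_lt]
      constructor <;> linarith [h1.1, h1.2, h2.1, h2.2]
    refine ⟨(1 / 2 : ℝ) ^ k, by positivity, q k x / N k, div_pos hqx (hN0 k), fun y => ?_⟩
    have hwk : w k = (1 / 2 : ℝ) ^ k := if_pos hgood
    have hs : Summable (fun k => w k * Real.exp (V (x, y) k)) := by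
      refine Summable.of_nonneg_of_le (hterm (x, y)) (fun k => ?_)
        (summable_geometric_two.mul_right (Real.exp ‖V (x, y)‖))
      exact mul_le_mul (hw1 k) (Real.exp_le_exp.mpr
        ((le_abs_self _).trans ((V (x, y)).norm_coe_le_norm k))) (Real.exp_pos _).le (by positivity)
    have := hs.le_tsum k (fun j _ => hterm (x, y) j)
    rwa [hwk, hVk] at this

/-- supremum from upper bound and limit. -/
theorem sup_aux (f : ℝ → ℝ) (c : ℝ) (h : ∀ y, f y ≤ c)
    (ht : Filter.Tendsto f Filter.atTop (nhds c)) : (⨆ y : ℝ, ((f y : ℝ) : EReal)) = (c : EReal) := by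
  apply le_antisymm
  · exact iSup_le fun y => EReal.coe_le_coe_iff.mpr (h y)
  · exact le_of_tendsto' ((continuous_coe_real_ereal.tendsto c).comp ht)
      fun y => le_iSup (fun y : ℝ => ((f y : ℝ) : EReal)) y

/-- for every open `U ⊆ ℝⁿ` there is a function
`g : ℝⁿ × ℝ → ℝ`, real-analytic at every point, such that for each `x̄`,
`sup_{y ∈ ℝ} g(x̄, y)` (computed in `ℝ̄`) equals `1` if `x̄ ∈ U` and `0` if not. -/
theorem stmt19 (n : ℕ) (U : Set (Fin n → ℝ)) (hU : IsOpen U) :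
    ∃ g : ((Fin n → ℝ) × ℝ) → ℝ,
      (∀ p : (Fin n → ℝ) × ℝ, AnalyticAt ℝ g p) ∧
      ∀ x : Fin n → ℝ,
        (x ∈ U → (⨆ y : ℝ, ((g (x, y) : ℝ) : EReal)) = 1) ∧
        (x ∉ U → (⨆ y : ℝ, ((g (x, y) : ℝ) : EReal)) = 0) := by
  obtain ⟨S, hS, hS0, hS2, hS3⟩ := key_aux n U hU
  -- with T = S / (1 + y²): g = T / (1 + T) - 2 / (1 + y²)
  have hpos : ∀ p : (Fin n → ℝ) × ℝ, 0 < 1 + p.2 ^ 2 + S p := fun p => by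
    have := hS0 p
    positivity
  have hlim : Filter.Tendsto (fun y : ℝ => 2 / (1 + y ^ 2)) Filter.atTop (nhds 0) :=
    Filter.Tendsto.const_div_atTop (Filter.tendsto_atTop_add_const_left _ _
      (Filter.tendsto_pow_atTop two_ne_zero)) 2
  refine ⟨fun p => S p / (1 + p.2 ^ 2 + S p) - 2 / (1 + p.2 ^ 2), fun p => ?_, fun x => ⟨?_, ?_⟩⟩
  · have h2 : AnalyticAt ℝ (fun p : (Fin n → ℝ) × ℝ => 1 + p.2 ^ 2) p :=
      analyticAt_const.add (analyticAt_snd.pow 2)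
    exact ((hS p).div (h2.add (hS p)) (hpos p).ne').sub
      (analyticAt_const.div h2 (by positivity))
  · intro hx
    obtain ⟨a, ha, b, hb, hab⟩ := hS3 x hx
    refine sup_aux _ 1 (fun y => ?_) ?_
    · have h1 : S (x, y) / (1 + y ^ 2 + S (x, y)) ≤ 1 := by
        rw [div_le_one (hpos (x, y))]
        nlinarith [sq_nonneg y]
      have h2 : 0 ≤ 2 / (1 + y ^ 2) := by positivity
      change S (x, y) / (1 + y ^ 2 + S (x, y)) - 2 / (1 + y ^ 2) ≤ 1
      linarith
    · have hk : Filter.Tendsto (fun y : ℝ => (1 + y ^ 2) / S (x, y)) Filter.atTop (nhds 0) := by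
        -- exp t ≥ t²/2 with t = b y²
        have hbd : ∀ y : ℝ, (1 + y ^ 2) / S (x, y) ≤ (1 / (a * min 1 (b ^ 2 / 2))) * (2 / (1 + y ^ 2)) := by
          intro y
          have hm : 0 < min 1 (b ^ 2 / 2) := lt_min one_pos (by positivity)
          have h1 : min 1 (b ^ 2 / 2) * (1 + y ^ 4) ≤ Real.exp (b * y ^ 2) := by
            have := Real.quadratic_le_exp_of_nonneg (x := b * y ^ 2) (by positivity)
            have h3 := min_le_left 1 (b ^ 2 / 2)
            have h4 := mul_le_mul_of_nonneg_right (min_le_right 1 (b ^ 2 / 2))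
              (show 0 ≤ y ^ 4 by positivity)
            have h5 : 0 ≤ b * y ^ 2 := by positivity
            nlinarith
          have h2 : a * (min 1 (b ^ 2 / 2) * (1 + y ^ 4)) ≤ S (x, y) :=
            (mul_le_mul_of_nonneg_left h1 ha.le).trans (hab y)
          have hSp : 0 < S (x, y) := lt_of_lt_of_le (by positivity) h2
          rw [div_mul_div_comm, div_le_div_iff₀ hSp (by positivity)]
          nlinarith [mul_le_mul_of_nonneg_left (show (1 + y ^ 2) ^ 2 ≤ 2 * (1 + y ^ 4) by
            nlinarith [sq_nonneg (y ^ 2 - 1)]) (mul_pos ha hm).le]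
        refine squeeze_zero (fun y => div_nonneg (by positivity) (hS0 _)) hbd ?_
        simpa using hlim.const_mul (1 / (a * min 1 (b ^ 2 / 2)))
      have h1 : Filter.Tendsto (fun y : ℝ => 1 / ((1 + y ^ 2) / S (x, y) + 1) - 2 / (1 + y ^ 2))
          Filter.atTop (nhds 1) := by
        have := ((tendsto_const_nhds (x := (1 : ℝ))).div (hk.add_const 1) (by norm_num)).sub hlim
        simpa using this
      refine h1.congr fun y => ?_
      have hSp : 0 < S (x, y) := lt_of_lt_of_le (by positivity) (hab y)
      have := hpos (x, y)
      congr 1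
      field_simp
  · intro hx
    refine sup_aux _ 0 (fun y => ?_) ?_
    · have h1 : S (x, y) / (1 + y ^ 2 + S (x, y)) ≤ 2 / (1 + y ^ 2) := by
        have := hS0 (x, y)
        exact div_le_div₀ (by norm_num) (hS2 x hx y) (by positivity) (by linarith)
      change S (x, y) / (1 + y ^ 2 + S (x, y)) - 2 / (1 + y ^ 2) ≤ 0
      linarith
    · have h0 : Filter.Tendsto (fun y : ℝ => S (x, y) / (1 + y ^ 2 + S (x, y)))
          Filter.atTop (nhds 0) := by
        refine squeeze_zero (fun y => div_nonneg (hS0 _) (hpos (x, y)).le) (fun y => ?_) hlim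
        have := hS0 (x, y)
        exact div_le_div₀ (by norm_num) (hS2 x hx y) (by positivity) (by linarith)
      simpa using h0.sub hlim
end
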